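/- Let n ≥ 3 and let Φ be a finite-dimensional complex representation of GL_n(F_q) such that: (a) the representation W_0(F_q^n) is isomorphic to a subrepresentation of Φ; (b) the restriction of Φ to SL_n(F_q), together with one added copy of the trivial representation, is isomorphic to the restriction of the total Weil module W(F_q^n) to SL_n(F_q); (c) the character of Φ ⊕ 𝟙 takes values only in {1, q, q², …, q^n}. Then there exists an integer e such that Φ ≅ ⊕_{j=0}^{q−2} W_j(F_q^n) ⊗ X^{e·j}, where X is the one-dimensional representation of GL_n(F_q) of order q−1 defined by X(g) = λ^k whenever det(g) = α^k. -/

import Mathlib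

open Matrix

/-- The "j-th Weil vector" `u^{(j)} := ∑_{i=0}^{q-2} λ^{-ij} e_{α^i • u}` in the total Weil
module `U →₀ ℂ`. -/
noncomputable def weilVec {Fq U : Type*} [Field Fq] [AddCommGroup U] [Module Fq U]
    (q : ℕ) (α : Fq) (lam : ℂ) (j : ℕ) (u : U) : U →₀ ℂ :=
  ∑ i ∈ Finset.range (q - 1), (lam ^ (i * j))⁻¹ • Finsupp.single ((α ^ i) • u) (1 : ℂ)

/-- The submodule `W_j(U)`, the ℂ-span of the vectors `u^{(j)}` for `u ≠ 0`. -/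
noncomputable def weilSub (Fq : Type*) {U : Type*} [Field Fq] [AddCommGroup U] [Module Fq U]
    (q : ℕ) (α : Fq) (lam : ℂ) (j : ℕ) : Submodule ℂ (U →₀ ℂ) :=
  Submodule.span ℂ (weilVec (Fq := Fq) q α lam j '' {u : U | u ≠ 0})

/-- The ℂ-linear action of `g ∈ GL_n(F_q)` on the total Weil module
`(Fin n → Fq) →₀ ℂ`, permuting the basis vectors `e_v` by `v ↦ g v`. -/
noncomputable def glWeilMap {n : ℕ} {Fq : Type*} [Field Fq] [Fintype Fq]
    (g : GL (Fin n) Fq) : ((Fin n → Fq) →₀ ℂ) →ₗ[ℂ] ((Fin n → Fq) →₀ ℂ) :=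
  Finsupp.lmapDomain ℂ ℂ (fun v : Fin n → Fq => (g : Matrix (Fin n) (Fin n) Fq) *ᵥ v)

section GroupElements

variable {n : ℕ} {F : Type*} [Field F]

lemma exists_gl_of_linear (f : (Fin n → F) →ₗ[F] (Fin n → F)) (d : F) (hd : d ≠ 0)
    (h : LinearMap.det f = d) :
    ∃ g : GL (Fin n) F, (g : Matrix (Fin n) (Fin n) F).det = d ∧
      ∀ v, (g : Matrix (Fin n) (Fin n) F) *ᵥ v = f v := by
  refine ⟨Matrix.GeneralLinearGroup.mkOfDetNeZero (LinearMap.toMatrix' f) ?_, ?_, ?_⟩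
  · rw [LinearMap.det_toMatrix', h]; exact hd
  · change (LinearMap.toMatrix' f).det = d
    rw [LinearMap.det_toMatrix', h]
  · intro v
    change (LinearMap.toMatrix' f) *ᵥ v = f v
    rw [← Matrix.toLin'_apply, Matrix.toLin'_toMatrix']

lemma exists_ker_pair (hn : 3 ≤ n) (u v : Fin n → F) (c : F) :
    ∃ (φ : Module.Dual F (Fin n → F)) (w : Fin n → F), φ u = 0 ∧ φ v = 0 ∧ φ w = c := by
  have hlt : Submodule.span F {u, v} < ⊤ := by
    rw [lt_top_iff_ne_top]
    intro h
    classical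
    have h1 := finrank_span_finset_le_card (R := F) ({u, v} : Finset (Fin n → F))
    have h2 : ({u, v} : Finset (Fin n → F)).card ≤ 2 := Finset.card_le_two
    rw [Finset.coe_pair, Set.finrank, h, finrank_top, Module.finrank_fin_fun] at h1
    omega
  obtain ⟨φ, h0, hk⟩ := Submodule.exists_le_ker_of_lt_top _ hlt
  obtain ⟨w, hw⟩ : ∃ w, φ w ≠ 0 := by
    by_contra! hcon
    exact h0 (LinearMap.ext hcon)
  refine ⟨φ, (c * (φ w)⁻¹) • w, ?_, ?_, ?_⟩
  · exact hk (Submodule.subset_span (by simp))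
  · exact hk (Submodule.subset_span (by simp))
  · rw [map_smul, smul_eq_mul, mul_assoc, inv_mul_cancel₀ hw, mul_one]

/-- scale two vectors by the same constant, with determinant one -/
lemma exists_sl_scale (hn : 3 ≤ n) (u v : Fin n → F) (c : F) (hc : c ≠ 0) :
    ∃ g : GL (Fin n) F, (g : Matrix (Fin n) (Fin n) F).det = 1 ∧
      (g : Matrix (Fin n) (Fin n) F) *ᵥ u = c • u ∧
      (g : Matrix (Fin n) (Fin n) F) *ᵥ v = c • v := by
  obtain ⟨φ, w, hu, hv, hw⟩ := exists_ker_pair hn u v ((c ^ n)⁻¹ - 1)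
  obtain ⟨g, hg, hgv⟩ := exists_gl_of_linear (c • LinearMap.transvection φ w) 1 one_ne_zero (by
    rw [LinearMap.det_smul, LinearMap.transvection.det, hw, Module.finrank_fin_fun]
    have := pow_ne_zero n hc
    field_simp
    ring)
  refine ⟨g, hg, ?_, ?_⟩ <;> rw [hgv] <;> simp [LinearMap.transvection.apply, hu, hv]

/-- fix `u`, scale `v`, with determinant one -/
lemma exists_sl_fix_scale (hn : 3 ≤ n) (u v : Fin n → F) (huv : v ∉ Submodule.span F {u})
    (c : F) (hc : c ≠ 0) :
    ∃ g : GL (Fin n) F, (g : Matrix (Fin n) (Fin n) F).det = 1 ∧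
      (g : Matrix (Fin n) (Fin n) F) *ᵥ u = u ∧
      (g : Matrix (Fin n) (Fin n) F) *ᵥ v = c • v := by
  obtain ⟨φ, w, hu, hv, hw⟩ := exists_ker_pair hn u v (c⁻¹ - 1)
  obtain ⟨ψ, h0, hk⟩ := Submodule.exists_le_ker_of_notMem huv
  have hψu : ψ u = 0 := hk (Submodule.mem_span_singleton_self u)
  obtain ⟨g, hg, hgv⟩ := exists_gl_of_linear
    (LinearMap.transvection φ w ∘ₗ LinearMap.transvection ψ (((c - 1) * (ψ v)⁻¹) • v))
    1 one_ne_zero (by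
    rw [LinearMap.det_comp, LinearMap.transvection.det, LinearMap.transvection.det, hw, map_smul,
      smul_eq_mul]
    field_simp
    ring)
  refine ⟨g, hg, ?_, ?_⟩
  · rw [hgv]; simp [LinearMap.transvection.apply, hu, hψu]
  · rw [hgv]
    simp only [LinearMap.comp_apply, LinearMap.transvection.apply, hv, map_add, map_smul,
      zero_smul, add_zero, smul_smul]
    rw [mul_comm, mul_assoc, inv_mul_cancel₀ h0, mul_one, sub_smul, one_smul]
    abel

/-- transitivity on nonzero vectors -/
lemma exists_sl_trans (hn : 3 ≤ n) (u v : Fin n → F) (hu : u ≠ 0) (hv : v ≠ 0) :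
    ∃ g : GL (Fin n) F, (g : Matrix (Fin n) (Fin n) F).det = 1 ∧
      (g : Matrix (Fin n) (Fin n) F) *ᵥ u = v := by
  by_cases h : v ∈ Submodule.span F {u}
  · obtain ⟨c, rfl⟩ := Submodule.mem_span_singleton.1 h
    have hc : c ≠ 0 := by rintro rfl; simp at hv
    obtain ⟨g, hg, h1, -⟩ := exists_sl_scale hn u u c hc
    exact ⟨g, hg, h1⟩
  · have h' : u ∉ Submodule.span F {v} := by
      intro hm
      obtain ⟨c, rfl⟩ := Submodule.mem_span_singleton.1 hm
      have hc : c ≠ 0 := by rintro rfl; simp at hu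
      apply h
      refine Submodule.mem_span_singleton.2 ⟨c⁻¹, ?_⟩
      rw [smul_smul, inv_mul_cancel₀ hc, one_smul]
    obtain ⟨ψ, h0, hk⟩ := Submodule.exists_le_ker_of_notMem h
    have hψu : ψ u = 0 := hk (Submodule.mem_span_singleton_self u)
    obtain ⟨χ, h0', hk'⟩ := Submodule.exists_le_ker_of_notMem h'
    have hχv : χ v = 0 := hk' (Submodule.mem_span_singleton_self v)
    obtain ⟨g, hg, hgv⟩ := exists_gl_of_linear
      (LinearMap.transvection ((ψ v)⁻¹ • ψ + (χ u)⁻¹ • χ) (v - u)) 1 one_ne_zero (by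
      rw [LinearMap.transvection.det]
      simp [hψu, hχv, h0, h0'])
    refine ⟨g, hg, ?_⟩
    rw [hgv]; simp [LinearMap.transvection.apply, hψu, h0']

lemma exists_trace_avoid [Fintype F] (d : F) : ∃ t : F, ∀ r : F, r ≠ 0 → r + d / r ≠ t := by
  classical
  by_contra! h
  have hsub : (Finset.univ : Finset F) ⊆ (Finset.univ.erase 0).image (fun r => r + d / r) := by
    intro t _
    obtain ⟨r, hr, ht⟩ := h t
    exact Finset.mem_image.2 ⟨r, by simp [hr], ht⟩
  have h1 := Finset.card_le_card hsub
  have h2 := (Finset.card_image_le (s := (Finset.univ.erase (0 : F))) (f := fun r => r + d / r))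
  have h3 : ((Finset.univ : Finset F).erase 0).card < (Finset.univ : Finset F).card :=
    Finset.card_erase_lt_of_mem (Finset.mem_univ _)
  omega

/-- an element with prescribed determinant and a single eigenvalue in `F` -/
lemma exists_gl_single_eigen [Fintype F] (hn : 3 ≤ n) (a β : F) (ha : a ≠ 0) (hβ : β ≠ 0) :
    ∃ g : GL (Fin n) F, (g : Matrix (Fin n) (Fin n) F).det = a ∧
      (∃ u : Fin n → F, u ≠ 0 ∧ (g : Matrix (Fin n) (Fin n) F) *ᵥ u = β • u) ∧
      ∀ (γ : F) (u : Fin n → F), u ≠ 0 → (g : Matrix (Fin n) (Fin n) F) *ᵥ u = γ • u → γ = β := by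
  obtain ⟨t, ht⟩ := exists_trace_avoid (a * (β ^ n)⁻¹)
  set d := a * (β ^ n)⁻¹ with hd
  have hd0 : d ≠ 0 := mul_ne_zero ha (inv_ne_zero (pow_ne_zero n hβ))
  let i0 : Fin n := ⟨0, by omega⟩
  let i1 : Fin n := ⟨1, by omega⟩
  let i2 : Fin n := ⟨2, by omega⟩
  have h01 : i0 ≠ i1 := by simp [i0, i1]
  have h02 : i0 ≠ i2 := by simp [i0, i2]
  have h12 : i1 ≠ i2 := by simp [i1, i2]
  let b := t - 1 - d
  let R : (Fin n → F) →ₗ[F] (Fin n → F) := LinearMap.transvection (LinearMap.proj i1)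
    (b • Pi.single i0 1 + (d - 1) • Pi.single i1 1)
  let L : (Fin n → F) →ₗ[F] (Fin n → F) := LinearMap.transvection (LinearMap.proj i0)
    (Pi.single i1 1)
  have hRdet : LinearMap.det R = d := by
    simp only [R, LinearMap.transvection.det]
    simp [h01.symm]
  have hLdet : LinearMap.det L = 1 := by
    simp only [L, LinearMap.transvection.det]
    simp [h01]
  have hform : ∀ x k, (L (R x)) k = x k + (if k = i0 then b * x i1 else 0) +
      (if k = i1 then (d - 1) * x i1 + x i0 + b * x i1 else 0) := by
    intro x k
    simp only [L, R, LinearMap.transvection.apply]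
    by_cases hk0 : k = i0
    · subst hk0
      simp [h01]; ring
    · by_cases hk1 : k = i1
      · subst hk1
        simp [h01, h01.symm]; ring
      · simp [Pi.single_apply, hk0, hk1]
  obtain ⟨g, hg, hgv⟩ := exists_gl_of_linear (β • (L ∘ₗ R)) a ha (by
    rw [LinearMap.det_smul, LinearMap.det_comp, hRdet, hLdet, Module.finrank_fin_fun, hd]
    field_simp)
  refine ⟨g, hg, ⟨Pi.single i2 1, ?_, ?_⟩, ?_⟩
  · intro h
    have := congrFun h i2
    simp at this
  · rw [hgv, LinearMap.smul_apply, LinearMap.comp_apply]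
    congr 1
    ext k
    rw [hform]
    simp [Pi.single_apply, h02, h12]
  · intro γ u hu h
    by_contra hne
    rw [hgv, LinearMap.smul_apply, LinearMap.comp_apply] at h
    set ρ := γ / β with hρ
    have hρ1 : ρ ≠ 1 := by
      intro h1
      apply hne
      rw [hρ] at h1
      field_simp at h1
      exact h1
    have hk : ∀ k, (L (R u)) k = ρ * u k := by
      intro k
      have := congrFun h k
      simp only [Pi.smul_apply, smul_eq_mul] at this
      rw [hρ]
      field_simp
      rw [mul_comm]
      exact this
    have e0 := hk i0
    have e1 := hk i1
    rw [hform] at e0 e1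
    simp only [h01, h01.symm, if_true, if_false, add_zero] at e0 e1
    by_cases hu1 : u i1 = 0
    · have hu0 : u i0 = 0 := by
        rw [hu1] at e1
        simpa using e1
      apply hu
      ext k
      by_cases hk0 : k = i0
      · subst hk0; exact hu0
      · by_cases hk1 : k = i1
        · subst hk1; exact hu1
        · have e2 := hk k
          rw [hform] at e2
          simp only [hk0, hk1, if_false, add_zero] at e2
          have : (ρ - 1) * u k = 0 := by rw [sub_mul, one_mul, ← e2, sub_self]
          exact (mul_eq_zero.1 this).resolve_left (sub_ne_zero.2 hρ1)
    · have hquad : ρ ^ 2 - t * ρ + d = 0 := by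
        have : (ρ ^ 2 - t * ρ + d) * u i1 = 0 := by
          simp only [b] at e0 e1
          linear_combination (-1 : F) * e0 - (ρ - 1) * e1
        exact (mul_eq_zero.1 this).resolve_right hu1
      have hρ0 : ρ ≠ 0 := by
        intro h0
        rw [h0] at hquad
        apply hd0
        simpa using hquad
      apply ht ρ hρ0
      field_simp
      linear_combination hquad

end GroupElements

section WeilBasics

lemma geom_orth {N : ℕ} {μ : ℂ} (h : μ ^ N = 1) (h1 : μ ≠ 1) :
    ∑ j ∈ Finset.range N, μ ^ j = 0 := by
  rw [geom_sum_eq h1, h, sub_self, zero_div]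

variable {n q : ℕ} {F : Type*} [Field F] {α : F} {lam : ℂ}

lemma glWeilMap_single [Fintype F] (g : GL (Fin n) F) (u : Fin n → F) (c : ℂ) :
    glWeilMap g (Finsupp.single u c) =
      Finsupp.single ((g : Matrix (Fin n) (Fin n) F) *ᵥ u) c := by
  simp [glWeilMap, Finsupp.mapDomain_single]

lemma glWeilMap_mul [Fintype F] (g h : GL (Fin n) F) (x : (Fin n → F) →₀ ℂ) :
    glWeilMap (g * h) x = glWeilMap g (glWeilMap h x) := by
  have : (glWeilMap (g * h) : ((Fin n → F) →₀ ℂ) →ₗ[ℂ] _) = glWeilMap g ∘ₗ glWeilMap h := by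
    apply Finsupp.lhom_ext
    intro u c
    simp [glWeilMap_single]
  rw [this]; rfl

lemma glWeilMap_one [Fintype F] (x : (Fin n → F) →₀ ℂ) :
    glWeilMap (1 : GL (Fin n) F) x = x := by
  have : (glWeilMap (1 : GL (Fin n) F) : ((Fin n → F) →₀ ℂ) →ₗ[ℂ] _) = LinearMap.id := by
    apply Finsupp.lhom_ext
    intro u c
    simp [glWeilMap_single]
  rw [this]; rfl

lemma glWeilMap_apply [Fintype F] (g : GL (Fin n) F) (x : (Fin n → F) →₀ ℂ) (v : Fin n → F) :
    glWeilMap g x ((g : Matrix (Fin n) (Fin n) F) *ᵥ v) = x v := by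
  simp only [glWeilMap, Finsupp.lmapDomain_apply]
  apply Finsupp.mapDomain_apply (f := fun v : Fin n → F => (g : Matrix (Fin n) (Fin n) F) *ᵥ v)
  intro a b hab
  have := congrArg (fun w => ((g⁻¹ : GL (Fin n) F) : Matrix (Fin n) (Fin n) F) *ᵥ w) hab
  simpa [Matrix.mulVec_mulVec, ← Matrix.GeneralLinearGroup.coe_mul] using this

lemma glWeilMap_weilVec [Fintype F] (g : GL (Fin n) F) (j : ℕ) (u : Fin n → F) :
    glWeilMap g (weilVec q α lam j u) =
      weilVec q α lam j ((g : Matrix (Fin n) (Fin n) F) *ᵥ u) := by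
  simp only [weilVec, map_sum, map_smul, glWeilMap_single, Matrix.mulVec_smul]

lemma gl_mulVec_ne_zero (g : GL (Fin n) F) {u : Fin n → F} (hu : u ≠ 0) :
    (g : Matrix (Fin n) (Fin n) F) *ᵥ u ≠ 0 := by
  intro h
  apply hu
  have := congrArg (fun w => ((g⁻¹ : GL (Fin n) F) : Matrix (Fin n) (Fin n) F) *ᵥ w) h
  simpa [Matrix.mulVec_mulVec, ← Matrix.GeneralLinearGroup.coe_mul] using this

lemma weilVec_mem (j : ℕ) {u : Fin n → F} (hu : u ≠ 0) :
    weilVec q α lam j u ∈ weilSub F (U := Fin n → F) q α lam j :=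
  Submodule.subset_span ⟨u, hu, rfl⟩

lemma weilSub_glWeilMap [Fintype F] (g : GL (Fin n) F) (j : ℕ) {x : (Fin n → F) →₀ ℂ}
    (hx : x ∈ weilSub F (U := Fin n → F) q α lam j) :
    glWeilMap g x ∈ weilSub F (U := Fin n → F) q α lam j := by
  induction hx using Submodule.span_induction with
  | mem x hx =>
    obtain ⟨u, hu, rfl⟩ := hx
    rw [glWeilMap_weilVec]
    exact weilVec_mem j (gl_mulVec_ne_zero g hu)
  | zero => rw [map_zero]; exact Submodule.zero_mem _
  | add x y _ _ hx hy => rw [map_add]; exact Submodule.add_mem _ hx hy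
  | smul c x _ hx => rw [map_smul]; exact Submodule.smul_mem _ _ hx

lemma weilVec_alpha (hα : α ^ (q - 1) = 1) (hl : lam ^ (q - 1) = 1) (hl0 : lam ≠ 0)
    (j : ℕ) (u : Fin n → F) :
    weilVec q α lam j (α • u) = lam ^ j • weilVec q α lam j u := by
  simp only [weilVec]
  set f : ℕ → ((Fin n → F) →₀ ℂ) :=
    fun i => (lam ^ (i * j))⁻¹ • Finsupp.single ((α ^ i) • u) (1 : ℂ) with hf
  have h1 : ∀ i, (lam ^ (i * j))⁻¹ • Finsupp.single ((α ^ i) • α • u) (1 : ℂ) =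
      lam ^ j • f (i + 1) := by
    intro i
    simp only [hf, smul_smul, pow_succ, add_mul, pow_add, one_mul]
    congr 1
    have := pow_ne_zero j hl0
    field_simp
  rw [Finset.sum_congr rfl (fun i _ => h1 i), ← Finset.smul_sum]
  congr 1
  have h2 := Finset.sum_range_succ f (q - 1)
  rw [Finset.sum_range_succ'] at h2
  have h3 : f (q - 1) = f 0 := by
    simp [hf, hα, pow_mul, hl]
  rw [h3] at h2
  exact add_right_cancel h2

lemma weilVec_alpha_pow (hα : α ^ (q - 1) = 1) (hl : lam ^ (q - 1) = 1) (hl0 : lam ≠ 0)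
    (i j : ℕ) (u : Fin n → F) :
    weilVec q α lam j (α ^ i • u) = lam ^ (i * j) • weilVec q α lam j u := by
  induction i with
  | zero => simp
  | succ i ih =>
    rw [pow_succ', mul_smul, weilVec_alpha hα hl hl0, ih, smul_smul, ← pow_add]
    congr 2; ring

/-- scalar action of `α` -/
noncomputable def scMap (n : ℕ) (α : F) : ((Fin n → F) →₀ ℂ) →ₗ[ℂ] ((Fin n → F) →₀ ℂ) :=
  Finsupp.lmapDomain ℂ ℂ (fun v : Fin n → F => α • v)

lemma scMap_apply (hα0 : α ≠ 0) (x : (Fin n → F) →₀ ℂ) (v : Fin n → F) :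
    scMap n α x (α • v) = x v := by
  simp only [scMap, Finsupp.lmapDomain_apply]
  exact Finsupp.mapDomain_apply (f := fun v : Fin n → F => α • v)
    (fun a b hab => smul_right_injective _ hα0 hab) x v

lemma mem_eig_iff (hα0 : α ≠ 0) (x : (Fin n → F) →₀ ℂ) (c : ℂ) :
    x ∈ Module.End.eigenspace (scMap n α) c ↔ ∀ v, x v = c * x (α • v) := by
  rw [Module.End.mem_eigenspace_iff]
  constructor
  · intro h v
    rw [← scMap_apply hα0 x v, h]; rfl
  · intro h
    ext w
    obtain ⟨v, rfl⟩ : ∃ v, w = α • v := ⟨α⁻¹ • w, by rw [smul_smul, mul_inv_cancel₀ hα0, one_smul]⟩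
    rw [scMap_apply hα0, h]; rfl

lemma weilVec_self (hα : IsPrimitiveRoot α (q - 1)) (hq : 0 < q - 1) (j : ℕ) {u : Fin n → F}
    (hu : u ≠ 0) : weilVec q α lam j u u = 1 := by
  classical
  simp only [weilVec, Finsupp.finsetSum_apply, Finsupp.smul_apply]
  rw [Finset.sum_eq_single 0]
  · simp
  · intro i hi hi0
    rw [Finsupp.single_apply, if_neg, smul_zero]
    intro h
    have h1 : (α ^ i - 1) • u = 0 := by rw [sub_smul, h, one_smul, sub_self]
    have h2 : α ^ i = 1 := sub_eq_zero.1 ((smul_eq_zero.1 h1).resolve_right hu)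
    exact hi0 (Nat.eq_zero_of_dvd_of_lt (hα.pow_eq_one_iff_dvd i |>.1 h2) (Finset.mem_range.1 hi))
  · intro h
    exact absurd (Finset.mem_range.2 hq) h

lemma weilVec_mem_eig (hα : α ^ (q - 1) = 1) (hl : lam ^ (q - 1) = 1) (hl0 : lam ≠ 0)
    (j : ℕ) (u : Fin n → F) :
    weilVec q α lam j u ∈ Module.End.eigenspace (scMap n α) (lam ^ j) := by
  rw [Module.End.mem_eigenspace_iff, ← weilVec_alpha hα hl hl0]
  simp [weilVec, scMap, Finsupp.mapDomain_single, smul_smul, mul_comm]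

lemma sum_weilVec (hl : IsPrimitiveRoot lam (q - 1)) (hq : 0 < q - 1) (u : Fin n → F) :
    ∑ j : Fin (q - 1), weilVec q α lam (j : ℕ) u = ((q - 1 : ℕ) : ℂ) • Finsupp.single u 1 := by
  rw [Fin.sum_univ_eq_sum_range (fun j => weilVec q α lam j u)]
  simp only [weilVec]
  rw [Finset.sum_comm]
  simp only [← Finset.sum_smul]
  have hl0 : lam ≠ 0 := hl.ne_zero hq.ne'
  rw [Finset.sum_eq_single 0]
  · simp
  · intro i hi hi0
    have : ∑ j ∈ Finset.range (q - 1), (lam ^ (i * j))⁻¹ = 0 := by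
      have := geom_orth (N := q - 1) (μ := (lam ^ i)⁻¹)
        (by rw [inv_pow, ← pow_mul, mul_comm, pow_mul, hl.pow_eq_one, one_pow, inv_one])
        (by
          intro h
          rw [inv_eq_one] at h
          exact hi0 (Nat.eq_zero_of_dvd_of_lt (hl.pow_eq_one_iff_dvd i |>.1 h)
            (Finset.mem_range.1 hi)))
      rw [← this]
      refine Finset.sum_congr rfl fun j _ => ?_
      rw [pow_mul, inv_pow]
    rw [this, zero_smul]
  · intro h
    exact absurd (Finset.mem_range.2 hq) h

/-- An `SL`-equivariant map on `W_j` respects scalars. -/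
lemma equiv_mem_eig [Fintype F] (hn : 3 ≤ n) (hα0 : α ≠ 0) (hα : α ^ (q - 1) = 1)
    (hl : lam ^ (q - 1) = 1) (hl0 : lam ≠ 0) (j : ℕ)
    (T : ((Fin n → F) →₀ ℂ) →ₗ[ℂ] ((Fin n → F) →₀ ℂ))
    (hT : ∀ g : GL (Fin n) F, (g : Matrix (Fin n) (Fin n) F).det = 1 →
      ∀ x ∈ weilSub F (U := Fin n → F) q α lam j, T (glWeilMap g x) = glWeilMap g (T x))
    {x : (Fin n → F) →₀ ℂ} (hx : x ∈ weilSub F (U := Fin n → F) q α lam j) :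
    T x ∈ Module.End.eigenspace (scMap n α) (lam ^ j) := by
  induction hx using Submodule.span_induction with
  | mem x hx =>
    obtain ⟨u, hu, rfl⟩ := hx
    rw [mem_eig_iff hα0]
    intro v
    obtain ⟨g, hg, hgu, hgv⟩ := exists_sl_scale hn u v α hα0
    have h1 := hT g hg _ (weilVec_mem j hu)
    rw [glWeilMap_weilVec, hgu, weilVec_alpha hα hl hl0, map_smul] at h1
    rw [← glWeilMap_apply g, hgv, ← h1]; rfl
  | zero => rw [map_zero]; exact Submodule.zero_mem _
  | add x y _ _ hx hy => rw [map_add]; exact Submodule.add_mem _ hx hy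
  | smul c x _ hx => rw [map_smul]; exact Submodule.smul_mem _ _ hx

/-- An `SL`-equivariant map on `W_j`, `j ≠ 0`, is a scalar. -/
lemma equiv_scalar [Fintype F] (hn : 3 ≤ n) (hα0 : α ≠ 0) (hα : IsPrimitiveRoot α (q - 1))
    (hgen : ∀ x : F, x ≠ 0 → ∃ i : ℕ, x = α ^ i) (hq : 0 < q - 1)
    (hl : lam ^ (q - 1) = 1) (hl0 : lam ≠ 0) (j : ℕ) (hj : lam ^ j ≠ 1)
    (T : ((Fin n → F) →₀ ℂ) →ₗ[ℂ] ((Fin n → F) →₀ ℂ))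
    (hT : ∀ g : GL (Fin n) F, (g : Matrix (Fin n) (Fin n) F).det = 1 →
      ∀ x ∈ weilSub F (U := Fin n → F) q α lam j, T (glWeilMap g x) = glWeilMap g (T x)) :
    ∃ s : ℂ, ∀ x ∈ weilSub F (U := Fin n → F) q α lam j, T x = s • x := by
  have key : ∀ u : Fin n → F, u ≠ 0 →
      ∃ s : ℂ, T (weilVec q α lam j u) = s • weilVec q α lam j u := by
    intro u hu
    have hy := equiv_mem_eig hn hα0 hα.pow_eq_one hl hl0 j T hT (weilVec_mem j hu)
    have hw := weilVec_mem_eig hα.pow_eq_one hl hl0 j u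
    rw [mem_eig_iff hα0] at hy hw
    set y := T (weilVec q α lam j u) with hydef
    refine ⟨y u, ?_⟩
    have hzero : ∀ z : (Fin n → F) →₀ ℂ, (∀ g : GL (Fin n) F,
        (g : Matrix (Fin n) (Fin n) F).det = 1 → (g : Matrix (Fin n) (Fin n) F) *ᵥ u = u →
        glWeilMap g z = z) → (∀ v, z v = lam ^ j * z (α • v)) → z u = 0 → z = 0 := by
      intro z hz1 hz2 hz3
      ext v
      rw [Finsupp.zero_apply]
      by_cases hv : v ∈ Submodule.span F {u}
      · obtain ⟨c, rfl⟩ := Submodule.mem_span_singleton.1 hv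
        by_cases hc : c = 0
        · have := hz2 0
          rw [smul_zero] at this
          have h2 : (lam ^ j - 1) * z 0 = 0 := by rw [sub_mul, ← this, one_mul, sub_self]
          rw [hc, zero_smul]
          exact (mul_eq_zero.1 h2).resolve_left (sub_ne_zero.2 hj)
        · obtain ⟨i, rfl⟩ := hgen c hc
          have : ∀ i : ℕ, z (α ^ i • u) = 0 := by
            intro i
            induction i with
            | zero => simpa using hz3
            | succ i ih =>
              rw [hz2, smul_smul, ← pow_succ'] at ih
              exact (mul_eq_zero.1 ih).resolve_left (pow_ne_zero j hl0)
          exact this i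
      · obtain ⟨g, hg, hgu, hgv⟩ := exists_sl_fix_scale hn u v hv α hα0
        have h1 := hz1 g hg hgu
        have h2 := glWeilMap_apply g z v
        rw [h1, hgv] at h2
        have h3 := hz2 v
        rw [h2] at h3
        have h4 : (lam ^ j - 1) * z v = 0 := by rw [sub_mul, ← h3, one_mul, sub_self]
        exact (mul_eq_zero.1 h4).resolve_left (sub_ne_zero.2 hj)
    rw [← sub_eq_zero]
    apply hzero
    · intro g hg hgu
      rw [map_sub, map_smul, glWeilMap_weilVec, hgu, hydef, ← hT g hg _ (weilVec_mem j hu),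
        glWeilMap_weilVec, hgu]
    · intro v
      rw [Finsupp.sub_apply, Finsupp.sub_apply, Finsupp.smul_apply, Finsupp.smul_apply, hy v, hw v]
      simp only [smul_eq_mul]
      ring
    · rw [Finsupp.sub_apply, Finsupp.smul_apply, weilVec_self hα hq j hu]
      simp
  let u0 : Fin n → F := Pi.single ⟨0, by omega⟩ 1
  have hu0 : u0 ≠ 0 := by simp [u0]
  obtain ⟨s, hs⟩ := key u0 hu0
  refine ⟨s, fun x hx => ?_⟩
  induction hx using Submodule.span_induction with
  | mem x hx =>
    obtain ⟨u, hu, rfl⟩ := hx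
    obtain ⟨g, hg, rfl⟩ := exists_sl_trans hn u0 u hu0 hu
    rw [← glWeilMap_weilVec, hT g hg _ (weilVec_mem j hu0), hs, map_smul]
  | zero => rw [map_zero, smul_zero]
  | add x y _ _ hx hy => rw [map_add, hx, hy, smul_add]
  | smul c x _ hx => rw [map_smul, hx, smul_comm]

/-- An `SL`-invariant functional on `W_j`, `j ≠ 0`, vanishes. -/
lemma inv_functional_zero [Fintype F] (hn : 3 ≤ n) (hα0 : α ≠ 0) (hα : α ^ (q - 1) = 1)
    (hl : lam ^ (q - 1) = 1) (hl0 : lam ≠ 0) (j : ℕ) (hj : lam ^ j ≠ 1)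
    (h : ((Fin n → F) →₀ ℂ) →ₗ[ℂ] ℂ)
    (hh : ∀ g : GL (Fin n) F, (g : Matrix (Fin n) (Fin n) F).det = 1 →
      ∀ x ∈ weilSub F (U := Fin n → F) q α lam j, h (glWeilMap g x) = h x)
    {x : (Fin n → F) →₀ ℂ} (hx : x ∈ weilSub F (U := Fin n → F) q α lam j) : h x = 0 := by
  induction hx using Submodule.span_induction with
  | mem x hx =>
    obtain ⟨u, hu, rfl⟩ := hx
    obtain ⟨g, hg, hgu, -⟩ := exists_sl_scale hn u u α hα0
    have h1 := hh g hg _ (weilVec_mem j hu)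
    rw [glWeilMap_weilVec, hgu, weilVec_alpha hα hl hl0, map_smul, smul_eq_mul] at h1
    have h4 : (lam ^ j - 1) * h (weilVec q α lam j u) = 0 := by rw [sub_mul, h1, one_mul, sub_self]
    exact (mul_eq_zero.1 h4).resolve_left (sub_ne_zero.2 hj)
  | zero => rw [map_zero]
  | add x y _ _ hx hy => rw [map_add, hx, hy, add_zero]
  | smul c x _ hx => rw [map_smul, hx, smul_zero]

end WeilBasics

section Pieces

set_option linter.unusedSectionVars false

variable {n q : ℕ} {F : Type*} [Field F] [Fintype F] {α : F} {lam : ℂ}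
  {V : Type*} [AddCommGroup V] [Module ℂ V]

lemma exists_piece (hn : 3 ≤ n) (hα0 : α ≠ 0) (hα : IsPrimitiveRoot α (q - 1))
    (hgen : ∀ x : F, x ≠ 0 → ∃ i : ℕ, x = α ^ i) (hq : 0 < q - 1)
    (hlam : IsPrimitiveRoot lam (q - 1))
    (Φ : Representation ℂ (GL (Fin n) F) V)
    (ι₀ : ((Fin n → F) →₀ ℂ) →ₗ[ℂ] V)
    (ha1 : ∀ x ∈ weilSub F (U := Fin n → F) q α lam 0, ι₀ x = 0 → x = 0)
    (ha2 : ∀ g : GL (Fin n) F, ∀ x ∈ weilSub F (U := Fin n → F) q α lam 0,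
          ι₀ (glWeilMap g x) = Φ g (ι₀ x))
    (Ψ : (V × ℂ) ≃ₗ[ℂ] ((Fin n → F) →₀ ℂ))
    (hb : ∀ g : GL (Fin n) F, (g : Matrix (Fin n) (Fin n) F).det = 1 →
        ∀ xc : V × ℂ, Ψ (Φ g xc.1, xc.2) = glWeilMap g (Ψ xc)) (j : Fin (q - 1)) :
    ∃ (ι : ((Fin n → F) →₀ ℂ) →ₗ[ℂ] V) (c : ℂ),
      (∀ x ∈ weilSub F (U := Fin n → F) q α lam j, ι x = 0 → x = 0) ∧
      (∀ x ∈ weilSub F (U := Fin n → F) q α lam j,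
        Ψ (ι x, 0) ∈ Module.End.eigenspace (scMap n α) (lam ^ (j : ℕ))) ∧
      (∀ (g : GL (Fin n) F) (k : ℕ), (g : Matrix (Fin n) (Fin n) F).det = α ^ k →
        ∀ x ∈ weilSub F (U := Fin n → F) q α lam j, Φ g (ι x) = c ^ k • ι (glWeilMap g x)) ∧
      ((j : ℕ) = 0 → c = 1) := by
  have hl := hlam.pow_eq_one
  have hl0 : lam ≠ 0 := hlam.ne_zero hq.ne'
  by_cases hj : (j : ℕ) = 0
  · rw [hj]
    refine ⟨ι₀, 1, ha1, ?_, ?_, fun _ => rfl⟩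
    · intro x hx
      have := equiv_mem_eig hn hα0 hα.pow_eq_one hl hl0 0
        (Ψ.toLinearMap ∘ₗ LinearMap.inl ℂ V ℂ ∘ₗ ι₀) (by
          intro g hg x hx
          have := hb g hg (ι₀ x, 0)
          simpa [ha2 g x hx] using this) hx
      simpa using this
    · intro g k _ x hx
      rw [one_pow, one_smul, ha2 g x hx]
  · have hj1 : lam ^ (j : ℕ) ≠ 1 := by
      intro h
      exact hj (Nat.eq_zero_of_dvd_of_lt (hlam.pow_eq_one_iff_dvd _ |>.1 h) j.2)
    let ι : ((Fin n → F) →₀ ℂ) →ₗ[ℂ] V := LinearMap.fst ℂ V ℂ ∘ₗ Ψ.symm.toLinearMap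
    have hsymm : ∀ g : GL (Fin n) F, (g : Matrix (Fin n) (Fin n) F).det = 1 →
        ∀ x, Ψ.symm (glWeilMap g x) = (Φ g (Ψ.symm x).1, (Ψ.symm x).2) := by
      intro g hg x
      rw [LinearEquiv.symm_apply_eq, hb g hg, LinearEquiv.apply_symm_apply]
    have hιS : ∀ g : GL (Fin n) F, (g : Matrix (Fin n) (Fin n) F).det = 1 →
        ∀ x, ι (glWeilMap g x) = Φ g (ι x) := by
      intro g hg x
      simp [ι, hsymm g hg]
    have hsnd : ∀ x ∈ weilSub F (U := Fin n → F) q α lam j, (Ψ.symm x).2 = 0 := by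
      intro x hx
      exact inv_functional_zero hn hα0 hα.pow_eq_one hl hl0 j hj1
        (LinearMap.snd ℂ V ℂ ∘ₗ Ψ.symm.toLinearMap) (by
          intro g hg x _
          simp [hsymm g hg]) hx
    have hΨι : ∀ x ∈ weilSub F (U := Fin n → F) q α lam j, Ψ (ι x, 0) = x := by
      intro x hx
      rw [← LinearEquiv.eq_symm_apply]
      exact Prod.ext rfl (hsnd x hx).symm
    obtain ⟨g1, hg1, -, -⟩ := exists_gl_single_eigen hn α α hα0 hα0
    obtain ⟨c, hc⟩ := equiv_scalar hn hα0 hα hgen hq hl hl0 j hj1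
      (Ψ.toLinearMap ∘ₗ LinearMap.inl ℂ V ℂ ∘ₗ (Φ g1) ∘ₗ ι ∘ₗ glWeilMap g1⁻¹) (by
        intro s hs x hx
        have hconj : ((g1⁻¹ * s * g1 : GL (Fin n) F) : Matrix (Fin n) (Fin n) F).det = 1 := by
          have h1 : Matrix.GeneralLinearGroup.det (g1⁻¹ * s * g1) =
              Matrix.GeneralLinearGroup.det s := by
            simp [mul_comm]
          have h2 := congrArg Units.val h1
          exact Eq.trans h2 hs
        have h1 : glWeilMap g1⁻¹ (glWeilMap s x) =
            glWeilMap (g1⁻¹ * s * g1) (glWeilMap g1⁻¹ x) := by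
          rw [← glWeilMap_mul, ← glWeilMap_mul]
          congr 2
          group
        have h2 : Φ g1 (Φ (g1⁻¹ * s * g1) (ι (glWeilMap g1⁻¹ x))) =
            Φ s (Φ g1 (ι (glWeilMap g1⁻¹ x))) := by
          rw [← Module.End.mul_apply, ← Module.End.mul_apply, ← map_mul, ← map_mul]
          congr 2
          group
        have h3 := hb s hs (Φ g1 (ι (glWeilMap g1⁻¹ x)), 0)
        simp only [LinearMap.comp_apply, LinearMap.inl_apply, LinearEquiv.coe_coe]
        rw [h1, hιS _ hconj, h2]
        exact h3)
    have hc1 : ∀ x ∈ weilSub F (U := Fin n → F) q α lam j,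
        Φ g1 (ι x) = c • ι (glWeilMap g1 x) := by
      intro x hx
      have h1 := hc _ (weilSub_glWeilMap g1 j hx)
      simp only [LinearMap.comp_apply, LinearMap.inl_apply, LinearEquiv.coe_coe] at h1
      rw [← glWeilMap_mul, inv_mul_cancel, glWeilMap_one] at h1
      rw [← hΨι _ (weilSub_glWeilMap g1 j hx), ← map_smul] at h1
      have h2 := congrArg Prod.fst (Ψ.injective h1)
      simpa using h2
    have hck : ∀ k : ℕ, ∀ x ∈ weilSub F (U := Fin n → F) q α lam j,
        Φ (g1 ^ k) (ι x) = c ^ k • ι (glWeilMap (g1 ^ k) x) := by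
      intro k
      induction k with
      | zero => intro x _; simp [glWeilMap_one]
      | succ k ih =>
        intro x hx
        rw [pow_succ', map_mul, Module.End.mul_apply, ih x hx, map_smul,
          hc1 _ (weilSub_glWeilMap _ j hx), smul_smul, ← glWeilMap_mul, pow_succ]
    refine ⟨ι, c, ?_, ?_, ?_, fun h => absurd h hj⟩
    · intro x hx h0
      rw [← hΨι x hx, h0]
      exact map_zero Ψ
    · intro x hx
      rw [hΨι x hx]
      have hle : weilSub F (U := Fin n → F) q α lam j ≤
          Module.End.eigenspace (scMap n α) (lam ^ (j : ℕ)) := by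
        apply Submodule.span_le.2
        rintro _ ⟨u, -, rfl⟩
        exact weilVec_mem_eig hα.pow_eq_one hl hl0 j u
      exact hle hx
    · intro g k hg x hx
      have hdet : ((g * (g1 ^ k)⁻¹ : GL (Fin n) F) : Matrix (Fin n) (Fin n) F).det = 1 := by
        have h1 : Matrix.GeneralLinearGroup.det g = Matrix.GeneralLinearGroup.det (g1 ^ k) := by
          apply Units.ext
          rw [map_pow]
          simp [hg, hg1]
        have h2 : Matrix.GeneralLinearGroup.det (g * (g1 ^ k)⁻¹) = 1 := by
          rw [map_mul, map_inv, h1, mul_inv_cancel]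
        exact congrArg Units.val h2
      have hgg : g = (g * (g1 ^ k)⁻¹) * g1 ^ k := by group
      calc Φ g (ι x) = Φ (g * (g1 ^ k)⁻¹) (Φ (g1 ^ k) (ι x)) := by
            rw [← Module.End.mul_apply, ← map_mul, ← hgg]
        _ = c ^ k • ι (glWeilMap g x) := by
            rw [hck k x hx, map_smul, ← hιS _ hdet, ← glWeilMap_mul, ← hgg]

/-- The averaging projection onto `W_j`. -/
noncomputable def projW (n q : ℕ) (α : F) (lam : ℂ) (j : ℕ) :
    ((Fin n → F) →₀ ℂ) →ₗ[ℂ] ((Fin n → F) →₀ ℂ) := by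
  classical
  exact Finsupp.linearCombination ℂ
    (fun u => if u = 0 then 0 else (((q - 1 : ℕ) : ℂ)⁻¹ • weilVec q α lam j u))

lemma projW_single (j : ℕ) {u : Fin n → F} (hu : u ≠ 0) :
    projW n q α lam j (Finsupp.single u 1) = ((q - 1 : ℕ) : ℂ)⁻¹ • weilVec q α lam j u := by
  simp [projW, hu]

lemma projW_single_zero (j : ℕ) :
    projW n q α lam j (Finsupp.single 0 1) = 0 := by
  simp [projW]

lemma projW_mem (j : ℕ) (x : (Fin n → F) →₀ ℂ) :
    projW n q α lam j x ∈ weilSub F (U := Fin n → F) q α lam j := by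
  classical
  simp only [projW, Finsupp.linearCombination_apply, Finsupp.sum]
  refine Submodule.sum_mem _ fun u _ => Submodule.smul_mem _ _ ?_
  split_ifs with h
  · exact Submodule.zero_mem _
  · exact Submodule.smul_mem _ _ (weilVec_mem j h)

lemma sum_projW (hlam : IsPrimitiveRoot lam (q - 1)) (hq : 0 < q - 1) (x : (Fin n → F) →₀ ℂ) :
    x = (∑ j : Fin (q - 1), projW n q α lam j x) + Finsupp.single 0 (x 0) := by
  have : (LinearMap.id : ((Fin n → F) →₀ ℂ) →ₗ[ℂ] _) =
      (∑ j : Fin (q - 1), projW n q α lam j) + Finsupp.lsingle 0 ∘ₗ Finsupp.lapply 0 := by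
    apply Finsupp.lhom_ext'
    intro u
    apply LinearMap.ext_ring
    by_cases hu : u = 0
    · subst hu
      simp [LinearMap.sum_apply, projW_single_zero]
    · have hN : ((q - 1 : ℕ) : ℂ) ≠ 0 := Nat.cast_ne_zero.2 hq.ne'
      simp only [LinearMap.comp_apply, LinearMap.add_apply, LinearMap.sum_apply,
        Finsupp.lsingle_apply, projW_single _ hu, Finsupp.lapply_apply, LinearMap.id_apply]
      rw [← Finset.smul_sum, sum_weilVec hlam hq, smul_smul, inv_mul_cancel₀ hN]
      simp [hu]
  have h := congrArg (fun f => f x) this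
  simpa [LinearMap.sum_apply] using h

/-- The trace formula. -/
lemma trace_formula [FiniteDimensional ℂ V] (hα : α ^ (q - 1) = 1)
    (hq : 0 < q - 1) (hlam : IsPrimitiveRoot lam (q - 1))
    (ι : Fin (q - 1) → ((Fin n → F) →₀ ℂ) →ₗ[ℂ] V) (c : Fin (q - 1) → ℂ)
    (J : ((Fin n → F) →₀ ℂ) ≃ₗ[ℂ] (V × ℂ))
    (hJ : ∀ x, J x = (∑ j : Fin (q - 1), ι j (projW n q α lam j x), x 0))
    (g : GL (Fin n) F) (Φg : V →ₗ[ℂ] V)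
    (hΦ : ∀ (j : Fin (q - 1)), ∀ x ∈ weilSub F (U := Fin n → F) q α lam j,
      Φg (ι j x) = c j • ι j (glWeilMap g x))
    (f : ℕ → ℂ) (hf : ∀ j : Fin (q - 1), ∑ i ∈ Finset.range (q - 1), f i * lam ^ (i * j) = c j) :
    1 + LinearMap.trace ℂ V Φg = 1 + ∑ i ∈ Finset.range (q - 1),
      f i * (Nat.card {u : Fin n → F // u ≠ 0 ∧
        α ^ i • ((g : Matrix (Fin n) (Fin n) F) *ᵥ u) = u} : ℂ) := by
  classical
  have hl0 : lam ≠ 0 := hlam.ne_zero hq.ne'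
  let K : ((Fin n → F) →₀ ℂ) →ₗ[ℂ] ((Fin n → F) →₀ ℂ) := Finsupp.linearCombination ℂ
    (fun u => if u = 0 then Finsupp.single 0 1 else
      ∑ i ∈ Finset.range (q - 1), f i •
        Finsupp.single (α ^ i • ((g : Matrix (Fin n) (Fin n) F) *ᵥ u)) (1 : ℂ))
  have hα0 : α ≠ 0 := by
    rintro rfl
    rw [zero_pow hq.ne'] at hα
    exact zero_ne_one hα
  have hcomm : J.toLinearMap ∘ₗ K = (Φg.prodMap LinearMap.id) ∘ₗ J.toLinearMap := by
    apply Finsupp.lhom_ext'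
    intro u
    apply LinearMap.ext_ring
    simp only [LinearMap.comp_apply, Finsupp.lsingle_apply, LinearEquiv.coe_coe]
    by_cases hu : u = 0
    · subst hu
      simp [K, hJ, projW_single_zero]
    · have hgu := gl_mulVec_ne_zero g hu
      have hne : ∀ i : ℕ, α ^ i • ((g : Matrix (Fin n) (Fin n) F) *ᵥ u) ≠ 0 :=
        fun i => smul_ne_zero (pow_ne_zero i hα0) hgu
      have hK : K (Finsupp.single u 1) = ∑ i ∈ Finset.range (q - 1), f i •
        Finsupp.single (α ^ i • ((g : Matrix (Fin n) (Fin n) F) *ᵥ u)) (1 : ℂ) := by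
        simp [K, hu]
      rw [hK, hJ, hJ]
      refine Prod.ext ?_ ?_
      · simp only [LinearMap.prodMap_apply, map_sum, map_smul, projW_single _ hu,
          projW_single _ (hne _), weilVec_alpha_pow hα hlam.pow_eq_one hl0]
        refine Finset.sum_congr rfl fun j _ => ?_
        rw [hΦ j _ (weilVec_mem _ hu), glWeilMap_weilVec, ← hf j, Finset.sum_smul,
          Finset.smul_sum]
        refine Finset.sum_congr rfl fun i _ => ?_
        simp only [smul_smul]
        congr 1
        ring
      · simp [hu, hne]
  have htr : LinearMap.trace ℂ _ K = LinearMap.trace ℂ _ (Φg.prodMap (LinearMap.id (M := ℂ))) := by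
    rw [← LinearMap.trace_conj' K J]
    congr 1
    rw [LinearEquiv.conj_apply, hcomm, LinearMap.comp_assoc]
    simp
  rw [LinearMap.trace_prodMap', LinearMap.trace_id, Module.finrank_self, Nat.cast_one] at htr
  rw [add_comm, ← htr, LinearMap.trace_eq_matrix_trace ℂ Finsupp.basisSingleOne K, Matrix.trace]
  simp only [Matrix.diag_apply, LinearMap.toMatrix_apply, Finsupp.coe_basisSingleOne,
    Finsupp.basisSingleOne_repr, LinearEquiv.refl_apply]
  rw [← Finset.add_sum_erase _ _ (Finset.mem_univ (0 : Fin n → F))]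
  congr 1
  · simp [K]
  · have : ∀ u ∈ Finset.univ.erase (0 : Fin n → F), K (Finsupp.single u 1) u =
        ∑ i ∈ Finset.range (q - 1), f i *
          (if α ^ i • ((g : Matrix (Fin n) (Fin n) F) *ᵥ u) = u then 1 else 0) := by
      intro u hu
      have hu0 : u ≠ 0 := Finset.ne_of_mem_erase hu
      simp [K, hu0, Finsupp.single_apply]
    rw [Finset.sum_congr rfl this, Finset.sum_comm]
    refine Finset.sum_congr rfl fun i _ => ?_
    rw [← Finset.mul_sum, Finset.sum_boole]
    congr 2
    rw [Nat.card_eq_fintype_card, Fintype.card_subtype]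
    congr 1
    ext u
    simp

end Pieces

theorem main_aux (q n : ℕ) (hq2 : 2 ≤ q)
    (hn : 3 ≤ n)
    (Fq : Type*) [Field Fq] [Fintype Fq] (hcard : Fintype.card Fq = q)
    (α : Fq) (hα0 : α ≠ 0) (hα : ∀ x : Fq, x ≠ 0 → ∃ i : ℕ, x = α ^ i)
    (lam : ℂ) (hlam : IsPrimitiveRoot lam (q - 1))
    (V : Type*) [AddCommGroup V] [Module ℂ V] [FiniteDimensional ℂ V]
    (Φ : Representation ℂ (GL (Fin n) Fq) V)
    -- (a) `W_0(F_q^n)` is isomorphic to a subrepresentation of `Φ`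
    (ha : ∃ ι₀ : ((Fin n → Fq) →₀ ℂ) →ₗ[ℂ] V,
      (∀ x ∈ weilSub Fq (U := Fin n → Fq) q α lam 0, ι₀ x = 0 → x = 0)
      ∧ ∀ g : GL (Fin n) Fq, ∀ x ∈ weilSub Fq (U := Fin n → Fq) q α lam 0,
          ι₀ (glWeilMap g x) = Φ g (ι₀ x))
    -- (b) `Φ|_{SL_n(F_q)} ⊕ 𝟙 ≅ W(F_q^n)|_{SL_n(F_q)}`
    (hb : ∃ Ψ : (V × ℂ) ≃ₗ[ℂ] ((Fin n → Fq) →₀ ℂ),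
      ∀ g : GL (Fin n) Fq, (g : Matrix (Fin n) (Fin n) Fq).det = 1 →
        ∀ xc : V × ℂ, Ψ (Φ g xc.1, xc.2) = glWeilMap g (Ψ xc))
    -- (c) the character of `Φ ⊕ 𝟙` takes values in `{1, q, q², …, q^n}`
    (hc : ∀ g : GL (Fin n) Fq, ∃ i : ℕ, i ≤ n
      ∧ 1 + LinearMap.trace ℂ V (Φ g) = (q : ℂ) ^ i) :
    -- conclusion : Φ ≅ ⊕_{j=0}^{q-2} W_j ⊗ X^{e j} for some integer e, where X is the
    -- linear character with X(g) = λ^k whenever det g = α^k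
    ∀ X : GL (Fin n) Fq → ℂ,
      (∀ (g : GL (Fin n) Fq) (k : ℕ),
          (g : Matrix (Fin n) (Fin n) Fq).det = α ^ k → X g = lam ^ k) →
      ∃ (e : ℤ) (ι : Fin (q - 1) → ((Fin n → Fq) →₀ ℂ) →ₗ[ℂ] V),
        (∀ j : Fin (q - 1), ∀ x ∈ weilSub Fq (U := Fin n → Fq) q α lam (j : ℕ),
            ι j x = 0 → x = 0)
        ∧ iSupIndep (fun j : Fin (q - 1) =>
            (weilSub Fq (U := Fin n → Fq) q α lam (j : ℕ)).map (ι j))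
        ∧ (⨆ j : Fin (q - 1),
            (weilSub Fq (U := Fin n → Fq) q α lam (j : ℕ)).map (ι j)) = ⊤
        ∧ (∀ j : Fin (q - 1), ∀ g : GL (Fin n) Fq,
            ∀ x ∈ weilSub Fq (U := Fin n → Fq) q α lam (j : ℕ),
              Φ g (ι j x) = X g ^ (e * (j : ℕ)) • ι j (glWeilMap g x)) := by
  intro X hX
  have hq : 0 < q - 1 := by omega
  have hαp : IsPrimitiveRoot α (q - 1) := by
    let a : Fqˣ := Units.mk0 α hα0
    have h1 : orderOf a = Nat.card Fqˣ := by
      apply orderOf_eq_card_of_forall_mem_zpowers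
      intro x
      obtain ⟨i, hi⟩ := hα x x.ne_zero
      refine ⟨(i : ℤ), ?_⟩
      apply Units.ext
      simp [a, hi]
    classical
    rw [Nat.card_eq_fintype_card, Fintype.card_units, hcard] at h1
    have h2 : orderOf α = q - 1 := by
      rw [← h1, ← orderOf_units]; rfl
    rw [← h2]
    exact IsPrimitiveRoot.orderOf α
  have hl := hlam.pow_eq_one
  have hl0 : lam ≠ 0 := hlam.ne_zero hq.ne'
  obtain ⟨ι₀, ha1, ha2⟩ := ha
  obtain ⟨Ψ, hb⟩ := hb
  choose ι c hinj heig hequiv hc0 using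
    exists_piece hn hα0 hαp hα hq hlam Φ ι₀ ha1 ha2 Ψ hb
  -- independence
  have hindep : iSupIndep (fun j : Fin (q - 1) =>
      (weilSub Fq (U := Fin n → Fq) q α lam (j : ℕ)).map (ι j)) := by
    rw [iSupIndep_iff_finsetSum_eq_zero_imp_eq_zero]
    intro s v hv hsum i hi
    have hE : iSupIndep ((Module.End.eigenspace (scMap n α)) ∘
        (fun j : Fin (q - 1) => lam ^ (j : ℕ))) := by
      apply (Module.End.eigenspaces_iSupIndep (scMap n α)).comp
      intro a b hab
      exact Fin.ext (hlam.pow_inj a.2 b.2 hab)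
    rw [iSupIndep_iff_finsetSum_eq_zero_imp_eq_zero] at hE
    have h1 := hE s (fun j => Ψ (v j, 0)) (by
      intro j hj
      obtain ⟨x, hx, hxv⟩ := hv j hj
      rw [← hxv]
      exact heig j x hx) (by
      rw [← map_sum]
      have : ∑ j ∈ s, ((v j, 0) : V × ℂ) = 0 := by
        refine Prod.ext ?_ ?_
        · rw [Prod.fst_sum]; exact hsum
        · rw [Prod.snd_sum]; simp
      rw [this, map_zero]) i hi
    have h2 : ((v i, 0) : V × ℂ) = 0 := (LinearEquiv.map_eq_zero_iff Ψ).1 h1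
    exact congrArg Prod.fst h2
  -- the isomorphism `J`
  let J₀ : ((Fin n → Fq) →₀ ℂ) →ₗ[ℂ] (V × ℂ) :=
    (∑ j : Fin (q - 1), ι j ∘ₗ projW n q α lam j).prod (Finsupp.lapply 0)
  have hJ₀ : ∀ x, J₀ x = (∑ j : Fin (q - 1), ι j (projW n q α lam j x), x 0) := by
    intro x
    simp [J₀]
  have hJinj : Function.Injective J₀ := by
    rw [injective_iff_map_eq_zero]
    intro x hx
    rw [hJ₀] at hx
    have h1 : ∑ j : Fin (q - 1), ι j (projW n q α lam j x) = 0 := congrArg Prod.fst hx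
    have h2 : x 0 = 0 := congrArg Prod.snd hx
    have h3 := (iSupIndep_iff_finsetSum_eq_zero_imp_eq_zero _).1 hindep Finset.univ
      (fun j => ι j (projW n q α lam j x))
      (fun j _ => ⟨_, projW_mem _ _, rfl⟩) h1
    rw [sum_projW (α := α) hlam hq x, h2, Finsupp.single_zero, add_zero]
    exact Finset.sum_eq_zero fun j hj => hinj j _ (projW_mem _ _) (h3 j hj)
  let J := LinearEquiv.ofInjectiveOfFinrankEq J₀ hJinj Ψ.finrank_eq.symm
  have hJ : ∀ x, J x = (∑ j : Fin (q - 1), ι j (projW n q α lam j x), x 0) := hJ₀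
  -- Fourier transform
  let f : ℕ → ℂ := fun i => ((q - 1 : ℕ) : ℂ)⁻¹ * ∑ j : Fin (q - 1), c j * (lam ^ (i * j))⁻¹
  have hf : ∀ j : Fin (q - 1), ∑ i ∈ Finset.range (q - 1), f i * lam ^ (i * j) = c j := by
    intro j
    have hN : ((q - 1 : ℕ) : ℂ) ≠ 0 := Nat.cast_ne_zero.2 hq.ne'
    have h1 : ∀ i, f i * lam ^ (i * j) = ((q - 1 : ℕ) : ℂ)⁻¹ *
        ∑ k : Fin (q - 1), c k * (lam ^ (j : ℕ) * (lam ^ (k : ℕ))⁻¹) ^ i := by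
      intro i
      simp only [f]
      rw [mul_assoc, Finset.sum_mul]
      congr 1
      refine Finset.sum_congr rfl fun k _ => ?_
      rw [mul_pow, inv_pow, ← pow_mul, ← pow_mul, mul_comm i, mul_comm i]
      ring
    rw [Finset.sum_congr rfl (fun i _ => h1 i), ← Finset.mul_sum, Finset.sum_comm,
      Finset.sum_eq_single j]
    · rw [← Finset.mul_sum, mul_inv_cancel₀ (pow_ne_zero _ hl0)]
      simp only [one_pow, Finset.sum_const, Finset.card_range, nsmul_eq_mul, mul_one]
      field_simp
    · intro k _ hkj
      rw [← Finset.mul_sum, geom_orth, mul_zero]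
      · rw [mul_pow, inv_pow, ← pow_mul, ← pow_mul, mul_comm (j : ℕ), mul_comm (k : ℕ), pow_mul,
          pow_mul, hl, one_pow, one_pow, inv_one, mul_one]
      · intro h
        rw [mul_inv_eq_one₀ (pow_ne_zero _ hl0)] at h
        exact hkj (Fin.ext (hlam.pow_inj j.2 k.2 h)).symm
    · intro h
      exact absurd (Finset.mem_univ _) h
  -- positivity
  have hpos : ∀ i ∈ Finset.range (q - 1), ∃ r : ℝ, 0 ≤ r ∧ f i = (r : ℂ) := by
    intro i hi
    obtain ⟨g, hg, ⟨u, hu, hgu⟩, huniq⟩ := exists_gl_single_eigen hn α (α ^ i)⁻¹ hα0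
      (inv_ne_zero (pow_ne_zero i hα0))
    have htr := trace_formula hαp.pow_eq_one hq hlam ι c J hJ g (Φ g) (by
      intro j x hx
      have := hequiv j g 1 (by rw [hg, pow_one]) x hx
      rwa [pow_one] at this) f hf
    obtain ⟨m, -, hm⟩ := hc g
    rw [hm, Finset.sum_eq_single i] at htr
    · set M := Nat.card {u : Fin n → Fq // u ≠ 0 ∧
        α ^ i • ((g : Matrix (Fin n) (Fin n) Fq) *ᵥ u) = u} with hM
      have hMpos : 0 < M := by
        rw [hM]
        have : Nonempty {u : Fin n → Fq // u ≠ 0 ∧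
            α ^ i • ((g : Matrix (Fin n) (Fin n) Fq) *ᵥ u) = u} :=
          ⟨⟨u, hu, by rw [hgu, smul_smul, mul_inv_cancel₀ (pow_ne_zero i hα0), one_smul]⟩⟩
        exact Nat.card_pos
      refine ⟨((q : ℝ) ^ m - 1) / M, ?_, ?_⟩
      · apply div_nonneg _ (Nat.cast_nonneg _)
        have h1 : (1 : ℝ) ≤ q := by exact_mod_cast (by omega : 1 ≤ q)
        have := one_le_pow₀ h1 (n := m)
        linarith
      · have hM0 : (M : ℂ) ≠ 0 := Nat.cast_ne_zero.2 hMpos.ne'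
        push_cast
        rw [htr, eq_div_iff hM0]
        ring
    · intro i' hi' hne
      have : IsEmpty {u : Fin n → Fq // u ≠ 0 ∧
          α ^ i' • ((g : Matrix (Fin n) (Fin n) Fq) *ᵥ u) = u} := by
        refine ⟨fun w => ?_⟩
        obtain ⟨w, hw, hgw⟩ := w
        have h1 := huniq ((α ^ i')⁻¹) w hw (by
          conv_rhs => rw [← hgw]
          rw [smul_smul, inv_mul_cancel₀ (pow_ne_zero i' hα0), one_smul])
        exact hne (hαp.pow_inj (Finset.mem_range.1 hi') (Finset.mem_range.1 hi)
          (inv_injective h1))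
      rw [Nat.card_of_isEmpty, Nat.cast_zero, mul_zero]
    · intro h
      exact absurd hi h
  -- norms
  have hnorm : ∀ j, ‖c j‖ = 1 := by
    intro j
    apply Complex.norm_eq_one_of_pow_eq_one (n := q - 1) _ hq.ne'
    let u0 : Fin n → Fq := Pi.single ⟨0, by omega⟩ 1
    have hu0 : u0 ≠ 0 := by simp [u0]
    have hmem := weilVec_mem (q := q) (α := α) (lam := lam) (j : ℕ) hu0
    have h1 := hequiv j 1 (q - 1) (by simp [hαp.pow_eq_one]) _ hmem
    rw [map_one, Module.End.one_apply, glWeilMap_one] at h1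
    have hne : ι j (weilVec q α lam j u0) ≠ 0 := by
      intro h0
      have h2 := hinj j _ hmem h0
      have h3 := weilVec_self (lam := lam) hαp hq j hu0
      rw [h2] at h3
      simp at h3
    have h2 : (c j ^ (q - 1) - 1) • ι j (weilVec q α lam j u0) = 0 := by
      rw [sub_smul, ← h1, one_smul, sub_self]
    exact sub_eq_zero.1 ((smul_eq_zero.1 h2).resolve_right hne)
  have hlnorm : ‖lam‖ = 1 := Complex.norm_eq_one_of_pow_eq_one hl hq.ne'
  have hsum1 : ∑ i ∈ Finset.range (q - 1), f i = 1 := by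
    have := hf ⟨0, hq⟩
    rw [hc0 ⟨0, hq⟩ rfl] at this
    simpa using this
  obtain ⟨e, he, hfe⟩ : ∃ e ∈ Finset.range (q - 1), f e ≠ 0 := by
    by_contra! h
    rw [Finset.sum_eq_zero h] at hsum1
    exact zero_ne_one hsum1
  choose! r hr0 hr using hpos
  have hce : ∀ j : Fin (q - 1), c j = lam ^ (e * j) := by
    intro j
    have hz : ∑ i ∈ Finset.range (q - 1),
        r i * (1 - (lam ^ (i * j) * (starRingEnd ℂ) (c j)).re) = 0 := by
      have h1 : ∑ i ∈ Finset.range (q - 1),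
          (f i - f i * lam ^ (i * j) * (starRingEnd ℂ) (c j)) = 0 := by
        rw [Finset.sum_sub_distrib, hsum1, ← Finset.sum_mul, hf j, Complex.mul_conj,
          Complex.normSq_eq_norm_sq, hnorm j]
        simp
      have h2 := congrArg Complex.re h1
      rw [Complex.re_sum, Complex.zero_re] at h2
      rw [← h2]
      refine Finset.sum_congr rfl fun i hi => ?_
      rw [hr i hi, mul_assoc, Complex.sub_re, Complex.re_ofReal_mul, Complex.ofReal_re]
      ring
    have hnn : ∀ i ∈ Finset.range (q - 1),
        0 ≤ r i * (1 - (lam ^ (i * j) * (starRingEnd ℂ) (c j)).re) := by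
      intro i hi
      apply mul_nonneg (hr0 i hi)
      have h1 := Complex.re_le_norm (lam ^ (i * j) * (starRingEnd ℂ) (c j))
      rw [norm_mul, norm_pow, hlnorm, one_pow, RCLike.norm_conj, hnorm j, one_mul] at h1
      linarith
    have h3 := (Finset.sum_eq_zero_iff_of_nonneg hnn).1 hz e he
    have hre : r e ≠ 0 := by
      intro h
      apply hfe
      rw [hr e he, h, Complex.ofReal_zero]
    have h4 := (mul_eq_zero.1 h3).resolve_left hre
    have h5 := Complex.normSq_sub (lam ^ (e * j)) (c j)
    rw [Complex.normSq_eq_norm_sq (lam ^ (e * (j : ℕ))), Complex.normSq_eq_norm_sq (c j), hnorm j,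
      norm_pow, hlnorm, one_pow] at h5
    have h6 : Complex.normSq (lam ^ (e * (j : ℕ)) - c j) = 0 := by
      rw [h5]; linarith
    exact (sub_eq_zero.1 (Complex.normSq_eq_zero.1 h6)).symm
  refine ⟨(e : ℤ), ι, hinj, hindep, ?_, ?_⟩
  · rw [eq_top_iff]
    intro v _
    have h1 := congrArg Prod.fst (J.apply_symm_apply (v, 0))
    rw [hJ] at h1
    simp only at h1
    rw [← h1]
    refine Submodule.sum_mem _ fun j _ => ?_
    exact Submodule.mem_iSup_of_mem j ⟨_, projW_mem _ _, rfl⟩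
  · intro j g x hx
    have hdet : (g : Matrix (Fin n) (Fin n) Fq).det ≠ 0 :=
      (Matrix.GeneralLinearGroup.det g).ne_zero
    obtain ⟨k, hk⟩ := hα _ hdet
    rw [hequiv j g k hk x hx, hX g k hk, hce j]
    congr 1
    rw [← Nat.cast_mul, zpow_natCast, ← pow_mul, ← pow_mul]
    congr 1
    ring

theorem statement14 (p q n : ℕ) (hp : p.Prime) (κ : ℕ) (hκ : 0 < κ) (hq : q = p ^ κ)
    (hn : 3 ≤ n)
    (Fq : Type*) [Field Fq] [Fintype Fq] (hcard : Fintype.card Fq = q)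
    (α : Fq) (hα : ∀ x : Fq, x ≠ 0 → ∃ i : ℕ, x = α ^ i)
    (lam : ℂ) (hlam : IsPrimitiveRoot lam (q - 1))
    (V : Type*) [AddCommGroup V] [Module ℂ V] [FiniteDimensional ℂ V]
    (Φ : Representation ℂ (GL (Fin n) Fq) V)
    -- (a) `W_0(F_q^n)` is isomorphic to a subrepresentation of `Φ`
    (ha : ∃ ι₀ : ((Fin n → Fq) →₀ ℂ) →ₗ[ℂ] V,
      (∀ x ∈ weilSub Fq (U := Fin n → Fq) q α lam 0, ι₀ x = 0 → x = 0)
      ∧ ∀ g : GL (Fin n) Fq, ∀ x ∈ weilSub Fq (U := Fin n → Fq) q α lam 0,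
          ι₀ (glWeilMap g x) = Φ g (ι₀ x))
    -- (b) `Φ|_{SL_n(F_q)} ⊕ 𝟙 ≅ W(F_q^n)|_{SL_n(F_q)}`
    (hb : ∃ Ψ : (V × ℂ) ≃ₗ[ℂ] ((Fin n → Fq) →₀ ℂ),
      ∀ g : GL (Fin n) Fq, (g : Matrix (Fin n) (Fin n) Fq).det = 1 →
        ∀ xc : V × ℂ, Ψ (Φ g xc.1, xc.2) = glWeilMap g (Ψ xc))
    -- (c) the character of `Φ ⊕ 𝟙` takes values in `{1, q, q², …, q^n}`
    (hc : ∀ g : GL (Fin n) Fq, ∃ i : ℕ, i ≤ n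
      ∧ 1 + LinearMap.trace ℂ V (Φ g) = (q : ℂ) ^ i) :
    -- conclusion : Φ ≅ ⊕_{j=0}^{q-2} W_j ⊗ X^{e j} for some integer e, where X is the
    -- linear character with X(g) = λ^k whenever det g = α^k
    ∀ X : GL (Fin n) Fq → ℂ,
      (∀ (g : GL (Fin n) Fq) (k : ℕ),
          (g : Matrix (Fin n) (Fin n) Fq).det = α ^ k → X g = lam ^ k) →
      ∃ (e : ℤ) (ι : Fin (q - 1) → ((Fin n → Fq) →₀ ℂ) →ₗ[ℂ] V),
        (∀ j : Fin (q - 1), ∀ x ∈ weilSub Fq (U := Fin n → Fq) q α lam (j : ℕ),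
            ι j x = 0 → x = 0)
        ∧ iSupIndep (fun j : Fin (q - 1) =>
            (weilSub Fq (U := Fin n → Fq) q α lam (j : ℕ)).map (ι j))
        ∧ (⨆ j : Fin (q - 1),
            (weilSub Fq (U := Fin n → Fq) q α lam (j : ℕ)).map (ι j)) = ⊤
        ∧ (∀ j : Fin (q - 1), ∀ g : GL (Fin n) Fq,
            ∀ x ∈ weilSub Fq (U := Fin n → Fq) q α lam (j : ℕ),
              Φ g (ι j x) = X g ^ (e * (j : ℕ)) • ι j (glWeilMap g x)) := by
  have hq2 : 2 ≤ q := by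
    rw [← hcard]
    exact Fintype.one_lt_card
  by_cases hα0 : α = 0
  · subst hα0
    have hone : ∀ x : Fq, x ≠ 0 → x = 1 := by
      intro x hx
      obtain ⟨i, hi⟩ := hα x hx
      rcases Nat.eq_zero_or_pos i with h | h
      · rw [hi, h, pow_zero]
      · rw [zero_pow h.ne'] at hi
        exact absurd hi hx
    have hq1 : q - 1 = 1 := by
      classical
      rw [← hcard, ← Fintype.card_units, Fintype.card_eq_one_iff]
      exact ⟨1, fun y => Units.ext (hone y y.ne_zero)⟩
    have hlam1 : lam = 1 := by
      have := hlam.pow_eq_one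
      rwa [hq1, pow_one] at this
    have hvec : ∀ j : ℕ, (weilVec q (0 : Fq) lam j : (Fin n → Fq) → _) = weilVec q (1 : Fq) lam j := by
      intro j
      funext u
      simp [weilVec, hq1]
    have hsub : ∀ j : ℕ, weilSub Fq (U := Fin n → Fq) q 0 lam j =
        weilSub Fq (U := Fin n → Fq) q 1 lam j := by
      intro j
      simp only [weilSub, hvec]
    intro X hX
    simp only [hsub] at ha ⊢
    refine main_aux q n hq2 hn Fq hcard 1 one_ne_zero (fun x hx => ⟨0, by rw [hone x hx, pow_zero]⟩)
      lam hlam V Φ ha hb hc X ?_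
    intro g k hg
    rw [hX g 0 (by rw [hg, one_pow, pow_zero]), hlam1, one_pow, one_pow]
  · exact main_aux q n hq2 hn Fq hcard α hα0 hα lam hlam V Φ ha hb hc
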